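/- arXiv:2311.07096 — 13 statements merged into one kernel-verified Lean document; each statement's English description precedes it below -/
import Mathlib

section
/- For every amplitude vector β ∈ [0,1]^N and every phase vector α ∈ Φ^N there exists a binary amplitude vector β' ∈ {0,1}^N such that |h(β',α)| ≥ |h(β,α)|. Consequently, the maximum of |h(β,α)| over all β ∈ [0,1]^N and α ∈ Φ^N is attained at a point where every reflection amplitude equals 0 or 1. (Lemma 1: in the optimal configuration, the reflection amplitude of each element is either 0 or 1.) -/
theorem aux_step (x w : ℂ) (t : ℝ) (ht : t ∈ Set.Icc (0:ℝ) 1) :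
    ‖x + w * (t : ℂ)‖ ≤ ‖x‖ ∨ ‖x + w * (t : ℂ)‖ ≤ ‖x + w‖ := by
  have h : ‖x + w * (t : ℂ)‖ ≤ (1 - t) * ‖x‖ + t * ‖x + w‖ := by
    have e : x + w * (t : ℂ) = ((1 - t : ℝ) : ℂ) * x + (t : ℂ) * (x + w) := by
      push_cast; ring
    rw [e]
    refine (norm_add_le _ _).trans (le_of_eq ?_)
    rw [norm_mul, norm_mul, Complex.norm_real, Complex.norm_real,
      Real.norm_of_nonneg ht.1, Real.norm_of_nonneg (sub_nonneg.2 ht.2)]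
  by_contra! hc
  have h0 := ht.1
  have h1 := ht.2
  rcases le_total ‖x‖ ‖x + w‖ with hh | hh
  · nlinarith
  · nlinarith

theorem aux_bin {N : ℕ} (w : Fin N → ℂ) (β : Fin N → ℝ)
    (hβ : ∀ n, β n ∈ Set.Icc (0:ℝ) 1) (s : Finset (Fin N)) :
    ∀ c : ℂ, ∃ T ⊆ s, ‖c + ∑ n ∈ s, w n * (β n : ℂ)‖ ≤ ‖c + ∑ n ∈ T, w n‖ := by
  induction s using Finset.induction_on with
  | empty => intro c; exact ⟨∅, by simp, by simp⟩
  | insert a s ha ih =>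
    intro c
    rw [Finset.sum_insert ha]
    have e : c + (w a * (β a : ℂ) + ∑ n ∈ s, w n * (β n : ℂ))
        = (c + ∑ n ∈ s, w n * (β n : ℂ)) + w a * (β a : ℂ) := by ring
    rw [e]
    rcases aux_step (c + ∑ n ∈ s, w n * (β n : ℂ)) (w a) (β a) (hβ a) with h | h
    · obtain ⟨T, hT, h2⟩ := ih c
      exact ⟨T, hT.trans (Finset.subset_insert _ _), h.trans h2⟩
    · obtain ⟨T, hT, h2⟩ := ih (c + w a)
      refine ⟨insert a T, Finset.insert_subset_insert _ hT, h.trans ?_⟩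
      rw [Finset.sum_insert (fun h => ha (hT h)), ← add_assoc]
      refine le_trans (le_of_eq ?_) h2
      congr 1; ring

theorem aux_main {N : ℕ} (h_d : ℂ) (v : Fin N → ℂ) (β : Fin N → ℝ)
    (hβ : ∀ n, β n ∈ Set.Icc (0:ℝ) 1) (α : Fin N → ℝ) :
    ∃ T : Finset (Fin N),
      ‖h_d + ∑ n, v n * (β n : ℂ) * Complex.exp ((α n : ℂ) * Complex.I)‖ ≤
      ‖h_d + ∑ n, v n * (((if n ∈ T then 1 else 0 : ℝ)) : ℂ) *
        Complex.exp ((α n : ℂ) * Complex.I)‖ := by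
  obtain ⟨T, -, h⟩ := aux_bin (fun n => v n * Complex.exp ((α n : ℂ) * Complex.I)) β hβ
    Finset.univ h_d
  refine ⟨T, le_trans (le_of_eq ?_) (h.trans (le_of_eq ?_))⟩
  · congr 2
    exact Finset.sum_congr rfl fun n _ => by ring
  · congr 2
    rw [← Finset.sum_filter_add_sum_filter_not Finset.univ (fun n => n ∈ T)
      (fun n => v n * (((if n ∈ T then 1 else 0 : ℝ)) : ℂ) *
        Complex.exp ((α n : ℂ) * Complex.I))]
    rw [Finset.sum_eq_zero (s := Finset.univ.filter (fun n => ¬ n ∈ T))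
      (by intro n hn; simp at hn; simp [hn]), add_zero]
    rw [Finset.filter_mem_eq_inter, Finset.univ_inter]
    exact Finset.sum_congr rfl fun n hn => by simp [hn]

/-- Lemma 1: for every amplitude vector `β ∈ [0,1]^N` and phase vector `α ∈ Φ^N` there is a
binary amplitude vector `β' ∈ {0,1}^N` doing at least as well; consequently the maximum of
`|h(β,α)|` over `β ∈ [0,1]^N`, `α ∈ Φ^N` is attained at a point with binary amplitudes. -/
theorem stmt_0 {N : ℕ} (hN : 0 < N) (h_d : ℂ) (v : Fin N → ℂ)
    (Φ : Finset ℝ) (hΦ : Φ.Nonempty) :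
    (∀ β : Fin N → ℝ, (∀ n, β n ∈ Set.Icc (0:ℝ) 1) →
      ∀ α : Fin N → ℝ, (∀ n, α n ∈ Φ) →
      ∃ β' : Fin N → ℝ, (∀ n, β' n = 0 ∨ β' n = 1) ∧
        ‖h_d + ∑ n, v n * (β n : ℂ) * Complex.exp ((α n : ℂ) * Complex.I)‖ ≤
        ‖h_d + ∑ n, v n * (β' n : ℂ) * Complex.exp ((α n : ℂ) * Complex.I)‖) ∧
    (∃ β' α' : Fin N → ℝ,
      (∀ n, β' n = 0 ∨ β' n = 1) ∧ (∀ n, α' n ∈ Φ) ∧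
      ∀ β : Fin N → ℝ, (∀ n, β n ∈ Set.Icc (0:ℝ) 1) →
        ∀ α : Fin N → ℝ, (∀ n, α n ∈ Φ) →
        ‖h_d + ∑ n, v n * (β n : ℂ) * Complex.exp ((α n : ℂ) * Complex.I)‖ ≤
        ‖h_d + ∑ n, v n * (β' n : ℂ) * Complex.exp ((α' n : ℂ) * Complex.I)‖) := by
  have hb : ∀ T : Finset (Fin N), ∀ n, (if n ∈ T then 1 else 0 : ℝ) = 0 ∨
      (if n ∈ T then 1 else 0 : ℝ) = 1 := by
    intro T n; split_ifs <;> simp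
  refine ⟨fun β hβ α _ => ?_, ?_⟩
  · obtain ⟨T, hT⟩ := aux_main h_d v β hβ α
    exact ⟨fun n => if n ∈ T then 1 else 0, hb T, hT⟩
  · obtain ⟨φ, hφ⟩ := hΦ
    obtain ⟨p, hp, hmax⟩ := Finset.exists_max_image
      ((Finset.univ : Finset (Finset (Fin N))) ×ˢ Fintype.piFinset (fun _ : Fin N => Φ))
      (fun p => ‖h_d + ∑ n, v n * (((if n ∈ p.1 then 1 else 0 : ℝ)) : ℂ) *
        Complex.exp ((p.2 n : ℂ) * Complex.I)‖)
      ⟨(∅, fun _ => φ), by simp [hφ]⟩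
    refine ⟨fun n => if n ∈ p.1 then 1 else 0, p.2, hb p.1, ?_, ?_⟩
    · simpa using hp
    · intro β hβ α hα
      obtain ⟨T, hT⟩ := aux_main h_d v β hβ α
      exact hT.trans (hmax (T, α) (by simpa using hα))
end

section
/- (Lemma 2) Suppose (g_n^*) is an optimal configuration with overall channel h^* and h^* ≠ 0. If for some element n we have v_n ≠ 0 and there exists an index i with ang(h^*, F_{n,i}) < π/2, then g_n^* ≠ 0, i.e., element n is not turned off in the optimal configuration. -/
/-- The angle in `[0,π]` between two nonzero complex numbers regarded as plane vectors:
`ang a b = arccos (Re (a * conj b) / (|a| * |b|))`. -/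
noncomputable def ang (a b : ℂ) : ℝ :=
  Real.arccos ((a * (starRingEnd ℂ) b).re / (‖a‖ * ‖b‖))

/-- Lemma 2: if some `F n i` makes an angle `< π/2` with the optimal overall channel `h^*`,
then element `n` is not turned off in the optimal configuration. -/
theorem stmt_3
    {N K : ℕ} (hN : 0 < N) (hK : 0 < K)
    (h_d : ℂ) (v : Fin N → ℂ) (φ : Fin K → ℝ)
    (hφinj : Function.Injective φ)
    (hφrange : ∀ i, 0 ≤ φ i ∧ φ i < 2 * Real.pi)
    (F : Fin N → Fin K → ℂ)
    (hF : ∀ m i, F m i = v m * Complex.exp ((φ i : ℂ) * Complex.I))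
    (g : Fin N → ℂ)
    (hg : ∀ m, g m = 0 ∨ ∃ i, g m = F m i)
    (hopt : ∀ g' : Fin N → ℂ, (∀ m, g' m = 0 ∨ ∃ i, g' m = F m i) →
      ‖h_d + ∑ m, g' m‖ ≤ ‖h_d + ∑ m, g m‖)
    (hstar : h_d + ∑ m, g m ≠ 0)
    (n : Fin N) (hvn : v n ≠ 0)
    (i : Fin K) (hang : ang (h_d + ∑ m, g m) (F n i) < Real.pi / 2) :
    g n ≠ 0 := by
  intro hgn
  unfold ang at hang
  rw [Real.arccos_lt_pi_div_two] at hang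
  have hsum : ∑ m, (Function.update g n (F n i)) m = ∑ m, g m + F n i := by
    rw [Finset.sum_update_of_mem (Finset.mem_univ n), ← Finset.erase_eq,
      ← Finset.add_sum_erase Finset.univ g (Finset.mem_univ n), hgn]
    ring
  have h := hopt (Function.update g n (F n i)) (by
    intro m
    by_cases hm : m = n
    · subst hm
      right
      exact ⟨i, by simp⟩
    · simpa [Function.update_of_ne hm] using hg m)
  rw [hsum, ← add_assoc] at h
  generalize h_d + ∑ m, g m = a at *
  generalize F n i = b at *
  have hpos : 0 < (a * (starRingEnd ℂ) b).re := by
    by_contra hc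
    exact absurd hang (not_lt.mpr (div_nonpos_of_nonpos_of_nonneg (not_lt.mp hc) (by positivity)))
  have h2 : ‖a + b‖ ^ 2 ≤ ‖a‖ ^ 2 := by gcongr
  rw [← Complex.normSq_eq_norm_sq, ← Complex.normSq_eq_norm_sq, Complex.normSq_add] at h2
  have := Complex.normSq_nonneg b
  linarith
end

section
/- (Lemma 3) Suppose (g_n^*) is an optimal configuration with overall channel h^* and h^* ≠ 0. If for some element n we have v_n ≠ 0 and ang(h^*, F_{n,i}) ≥ π/2 for every index i ∈ {1,…,K}, then g_n^* = 0, i.e., element n is turned off in the optimal configuration. -/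
/-- Lemma 3: if every `F n i` makes an angle `≥ π/2` with the optimal overall channel `h^*`,
then element `n` is turned off in the optimal configuration. -/
theorem stmt_4
    {N K : ℕ} (hN : 0 < N) (hK : 0 < K)
    (h_d : ℂ) (v : Fin N → ℂ) (φ : Fin K → ℝ)
    (hφinj : Function.Injective φ)
    (hφrange : ∀ i, 0 ≤ φ i ∧ φ i < 2 * Real.pi)
    (F : Fin N → Fin K → ℂ)
    (hF : ∀ m i, F m i = v m * Complex.exp ((φ i : ℂ) * Complex.I))
    (g : Fin N → ℂ)
    (hg : ∀ m, g m = 0 ∨ ∃ i, g m = F m i)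
    (hopt : ∀ g' : Fin N → ℂ, (∀ m, g' m = 0 ∨ ∃ i, g' m = F m i) →
      ‖h_d + ∑ m, g' m‖ ≤ ‖h_d + ∑ m, g m‖)
    (hstar : h_d + ∑ m, g m ≠ 0)
    (n : Fin N) (hvn : v n ≠ 0)
    (hang : ∀ i, Real.pi / 2 ≤ ang (h_d + ∑ m, g m) (F n i)) :
    g n = 0 := by
  by_contra hne
  obtain ⟨i, hi⟩ := (hg n).resolve_left hne
  have h1 := hang i
  rw [← hi] at h1
  have h2 := hopt (Function.update g n 0) (by
    intro m
    by_cases hm : m = n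
    · subst hm; simp
    · simpa [Function.update_of_ne hm] using hg m)
  have h3 : h_d + ∑ m, Function.update g n 0 m = (h_d + ∑ m, g m) - g n := by
    rw [Finset.sum_update_of_mem (Finset.mem_univ n),
      ← Finset.add_sum_erase Finset.univ g (Finset.mem_univ n), Finset.sdiff_singleton_eq_erase]
    ring
  rw [h3] at h2
  generalize h_d + ∑ m, g m = h at *
  have hp : 0 < ‖h‖ * ‖g n‖ := mul_pos (norm_pos_iff.2 hstar) (norm_pos_iff.2 hne)
  have h4 : (h * (starRingEnd ℂ) (g n)).re ≤ 0 := by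
    by_contra hc
    push Not at hc
    have := Real.arccos_lt_pi_div_two.2 (div_pos hc hp)
    unfold ang at h1
    linarith
  have h5 : ‖h - g n‖ ^ 2 ≤ ‖h‖ ^ 2 := by gcongr
  have h6 : 0 < ‖g n‖ ^ 2 := by have := norm_pos_iff.2 hne; positivity
  rw [Complex.sq_norm, Complex.sq_norm, Complex.normSq_sub] at h5
  rw [Complex.sq_norm] at h6
  linarith
end

section
/- (Theorem 1, part (i), existence) Suppose (g_n^*) is an optimal configuration with overall channel h^* ≠ 0, and let n be an element with v_n ≠ 0. If i is an index such that ang(h^*, F_{n,i}) ≤ ang(h^*, F_{n,l}) for every l ∈ {1,…,K} and ang(h^*, F_{n,i}) < π/2, then g_n^* = F_{n,i}. -/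
theorem ang_bound (a b : ℂ) :
    (a * (starRingEnd ℂ) b).re / (‖a‖ * ‖b‖) ∈ Set.Icc (-1 : ℝ) 1 := by
  have h1 : |(a * (starRingEnd ℂ) b).re| ≤ ‖a‖ * ‖b‖ := by
    have := Complex.abs_re_le_norm (a * (starRingEnd ℂ) b)
    rwa [norm_mul, RCLike.norm_conj] at this
  have h2 : |(a * (starRingEnd ℂ) b).re / (‖a‖ * ‖b‖)| ≤ 1 := by
    rw [abs_div, abs_of_nonneg (by positivity : 0 ≤ ‖a‖ * ‖b‖)]
    exact div_le_one_of_le₀ h1 (by positivity)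
  exact abs_le.mp h2

/-- Theorem 1 part (i), existence: if `F n i` has the smallest angle with `h^*` among
`F n 1, …, F n K` and that angle is `< π/2`, then `g n = F n i` in the optimal configuration. -/
theorem stmt_5
    {N K : ℕ} (hN : 0 < N) (hK : 0 < K)
    (h_d : ℂ) (v : Fin N → ℂ) (φ : Fin K → ℝ)
    (hφinj : Function.Injective φ)
    (hφrange : ∀ i, 0 ≤ φ i ∧ φ i < 2 * Real.pi)
    (F : Fin N → Fin K → ℂ)
    (hF : ∀ m i, F m i = v m * Complex.exp ((φ i : ℂ) * Complex.I))
    (g : Fin N → ℂ)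
    (hg : ∀ m, g m = 0 ∨ ∃ i, g m = F m i)
    (hopt : ∀ g' : Fin N → ℂ, (∀ m, g' m = 0 ∨ ∃ i, g' m = F m i) →
      ‖h_d + ∑ m, g' m‖ ≤ ‖h_d + ∑ m, g m‖)
    (hstar : h_d + ∑ m, g m ≠ 0)
    (n : Fin N) (hvn : v n ≠ 0)
    (i : Fin K)
    (hmin : ∀ l, ang (h_d + ∑ m, g m) (F n i) ≤ ang (h_d + ∑ m, g m) (F n l))
    (hang : ang (h_d + ∑ m, g m) (F n i) < Real.pi / 2) :
    g n = F n i := by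
  have hnorm : ∀ l, ‖F n l‖ = ‖v n‖ := by
    intro l
    rw [hF, norm_mul, Complex.norm_exp_ofReal_mul_I, mul_one]
  have hsum : h_d + ∑ m, Function.update g n (F n i) m = (h_d + ∑ m, g m) + (F n i - g n) := by
    rw [Finset.sum_update_of_mem (Finset.mem_univ n),
      ← Finset.add_sum_erase _ g (Finset.mem_univ n), Finset.sdiff_singleton_eq_erase]
    ring
  have ho := hopt (Function.update g n (F n i)) (by
    intro m
    by_cases hm : m = n
    · subst hm
      right
      exact ⟨i, by simp⟩
    · rw [Function.update_of_ne hm]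
      exact hg m)
  rw [hsum] at ho
  generalize h_d + ∑ m, g m = h at *
  have hpos : 0 < ‖h‖ * ‖v n‖ := mul_pos (norm_pos_iff.mpr hstar) (norm_pos_iff.mpr hvn)
  have key : (h * (starRingEnd ℂ) (g n)).re ≤ (h * (starRingEnd ℂ) (F n i)).re := by
    rcases hg n with h0 | ⟨l, hl⟩
    · rw [ang, Real.arccos_lt_pi_div_two, hnorm] at hang
      rw [h0]
      simpa using ((div_pos_iff_of_pos_right hpos).mp hang).le
    · have := (Real.strictAntiOn_arccos.le_iff_ge (ang_bound h (F n i)) (ang_bound h (F n l))).mp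
        (hmin l)
      rw [hnorm, hnorm, div_le_div_iff_of_pos_right hpos] at this
      rw [hl]
      exact this
  have hsq : ‖h + (F n i - g n)‖ ^ 2 ≤ ‖h‖ ^ 2 := by gcongr
  rw [← Complex.normSq_eq_norm_sq, ← Complex.normSq_eq_norm_sq, Complex.normSq_add,
    map_sub (starRingEnd ℂ), mul_sub, Complex.sub_re] at hsq
  have hz : Complex.normSq (F n i - g n) = 0 :=
    le_antisymm (by linarith) (Complex.normSq_nonneg _)
  exact (sub_eq_zero.mp (Complex.normSq_eq_zero.mp hz)).symm
end

section
/- (Theorem 1, part (i), uniqueness) Suppose (g_n^*) is an optimal configuration with overall channel h^* ≠ 0, and let n be an element with v_n ≠ 0. If i is an index such that ang(h^*, F_{n,i}) ≤ ang(h^*, F_{n,l}) for every l ∈ {1,…,K} and ang(h^*, F_{n,i}) < π/2, then for every l ≠ i we have ang(h^*, F_{n,l}) > ang(h^*, F_{n,i}); that is, F_{n,i} is the only vector among F_{n,1}, …, F_{n,K} having the smallest angle with h^*. -/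
theorem aux_ratio (h b : ℂ) : -1 ≤ (h * (starRingEnd ℂ) b).re / (‖h‖ * ‖b‖) ∧
    (h * (starRingEnd ℂ) b).re / (‖h‖ * ‖b‖) ≤ 1 := by
  have h1 : |(h * (starRingEnd ℂ) b).re| ≤ ‖h‖ * ‖b‖ := by
    have := Complex.abs_re_le_norm (h * (starRingEnd ℂ) b)
    simpa using this
  have h2 : |(h * (starRingEnd ℂ) b).re / (‖h‖ * ‖b‖)| ≤ 1 := by
    rw [abs_div, abs_of_nonneg (by positivity : 0 ≤ ‖h‖ * ‖b‖)]
    exact div_le_one_of_le₀ h1 (by positivity)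
  exact abs_le.mp h2

theorem aux_ang (h a b : ℂ) (hh : h ≠ 0) (ha : a ≠ 0) (hab : ‖a‖ = ‖b‖)
    (hle : ang h a ≤ ang h b) :
    (h * (starRingEnd ℂ) b).re ≤ (h * (starRingEnd ℂ) a).re := by
  by_contra hc
  push Not at hc
  have hp : 0 < ‖h‖ * ‖a‖ := by positivity
  have := Real.arccos_lt_arccos (aux_ratio h a).1
    (y := (h * (starRingEnd ℂ) b).re / (‖h‖ * ‖b‖))
    (by rw [← hab]; exact div_lt_div_of_pos_right hc hp) (aux_ratio h b).2
  unfold ang at hle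
  linarith

theorem aux_exp (x y : ℝ) (hx : 0 ≤ x ∧ x < 2 * Real.pi) (hy : 0 ≤ y ∧ y < 2 * Real.pi)
    (h : Complex.exp ((x : ℂ) * Complex.I) = Complex.exp ((y : ℂ) * Complex.I)) : x = y := by
  obtain ⟨k, hk⟩ := Complex.exp_eq_exp_iff_exists_int.mp h
  have h1 : x = y + k * (2 * Real.pi) := by
    have := congrArg Complex.im hk
    simpa using this
  have hpi := Real.pi_pos
  have h2 : (k : ℝ) < 1 := by
    by_contra hc
    push Not at hc
    nlinarith
  have h3 : (-1 : ℝ) < k := by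
    by_contra hc
    push Not at hc
    nlinarith
  have h4 : k = 0 := by
    have : k < 1 := by exact_mod_cast h2
    have : -1 < k := by exact_mod_cast h3
    omega
  simpa [h4] using h1

theorem aux_norm (h d : ℂ) (hle : ‖h + d‖ ≤ ‖h‖) :
    2 * (h * (starRingEnd ℂ) d).re + ‖d‖ ^ 2 ≤ 0 := by
  have h1 : ‖h + d‖ ^ 2 ≤ ‖h‖ ^ 2 := by gcongr
  rw [Complex.sq_norm, Complex.sq_norm, Complex.normSq_add] at h1
  rw [Complex.sq_norm]
  linarith

/-- Theorem 1 part (i), uniqueness: if `F n i` has the smallest angle with `h^*` and that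
angle is `< π/2`, then `F n i` is the unique minimizer of the angle with `h^*`. -/
theorem stmt_6
    {N K : ℕ} (hN : 0 < N) (hK : 0 < K)
    (h_d : ℂ) (v : Fin N → ℂ) (φ : Fin K → ℝ)
    (hφinj : Function.Injective φ)
    (hφrange : ∀ i, 0 ≤ φ i ∧ φ i < 2 * Real.pi)
    (F : Fin N → Fin K → ℂ)
    (hF : ∀ m i, F m i = v m * Complex.exp ((φ i : ℂ) * Complex.I))
    (g : Fin N → ℂ)
    (hg : ∀ m, g m = 0 ∨ ∃ i, g m = F m i)
    (hopt : ∀ g' : Fin N → ℂ, (∀ m, g' m = 0 ∨ ∃ i, g' m = F m i) →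
      ‖h_d + ∑ m, g' m‖ ≤ ‖h_d + ∑ m, g m‖)
    (hstar : h_d + ∑ m, g m ≠ 0)
    (n : Fin N) (hvn : v n ≠ 0)
    (i : Fin K)
    (hmin : ∀ l, ang (h_d + ∑ m, g m) (F n i) ≤ ang (h_d + ∑ m, g m) (F n l))
    (hang : ang (h_d + ∑ m, g m) (F n i) < Real.pi / 2) :
    ∀ l, l ≠ i → ang (h_d + ∑ m, g m) (F n i) < ang (h_d + ∑ m, g m) (F n l) := by
  intro l hl
  refine lt_of_le_of_ne (hmin l) fun heq => ?_
  have hnorm : ∀ m, ‖F n m‖ = ‖v n‖ := fun m => by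
    rw [hF, norm_mul, Complex.norm_exp_ofReal_mul_I, mul_one]
  have hne : ∀ m, F n m ≠ 0 := fun m => by
    rw [hF]; exact mul_ne_zero hvn (Complex.exp_ne_zero _)
  -- swapping the choice of element `n`
  have hswap : ∀ m, ‖(h_d + ∑ k, g k) + (F n m - g n)‖ ≤ ‖h_d + ∑ k, g k‖ := fun m => by
    have h1 := hopt (Function.update g n (F n m)) (fun k => by
      by_cases hk : k = n
      · subst hk
        right
        exact ⟨m, by simp⟩
      · simpa [Function.update_of_ne hk] using hg k)
    have h2 : ∑ k, Function.update g n (F n m) k = ∑ k, g k + (F n m - g n) := by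
      rw [Finset.sum_update_of_mem (Finset.mem_univ n),
        ← Finset.add_sum_erase Finset.univ g (Finset.mem_univ n), Finset.sdiff_singleton_eq_erase]
      ring
    rw [h2, ← add_assoc] at h1
    exact h1
  generalize h_d + ∑ m, g m = h at *
  have hmax : ∀ m, (h * (starRingEnd ℂ) (F n m)).re ≤ (h * (starRingEnd ℂ) (F n i)).re :=
    fun m => aux_ang h _ _ hstar (hne i) (by rw [hnorm, hnorm]) (hmin m)
  have hli := aux_ang h (F n l) (F n i) hstar (hne l) (by rw [hnorm, hnorm]) heq.ge
  have hpos : 0 < (h * (starRingEnd ℂ) (F n i)).re := by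
    have h1 := Real.arccos_lt_pi_div_two.mp hang
    by_contra hc
    push Not at hc
    have := div_nonpos_of_nonpos_of_nonneg hc (by positivity : 0 ≤ ‖h‖ * ‖F n i‖)
    linarith
  have hi := aux_norm _ _ (hswap i)
  have hl' := aux_norm _ _ (hswap l)
  rw [map_sub, mul_sub, Complex.sub_re] at hi hl'
  rcases hg n with h0 | ⟨m, h0⟩
  · rw [h0] at hi
    simp only [map_zero, mul_zero, Complex.zero_re] at hi
    nlinarith [sq_nonneg ‖F n i - 0‖]
  · rw [h0] at hi hl'
    have hm := hmax m
    have e1 : ‖F n i - F n m‖ ^ 2 = 0 := le_antisymm (by linarith) (sq_nonneg _)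
    have e2 : ‖F n l - F n m‖ ^ 2 = 0 := le_antisymm (by linarith) (sq_nonneg _)
    have e1' : F n i = F n m := sub_eq_zero.mp (norm_eq_zero.mp (pow_eq_zero_iff two_ne_zero |>.mp e1))
    have e2' : F n l = F n m := sub_eq_zero.mp (norm_eq_zero.mp (pow_eq_zero_iff two_ne_zero |>.mp e2))
    have e3 : F n l = F n i := e2'.trans e1'.symm
    rw [hF, hF] at e3
    exact hl (hφinj (aux_exp _ _ (hφrange l) (hφrange i) (mul_left_cancel₀ hvn e3)))
end

section
/- (Theorem 1, part (ii)) Suppose (g_n^*) is an optimal configuration with overall channel h^* ≠ 0, and let n be an element with v_n ≠ 0. Then the smallest angle among ang(h^*, F_{n,1}), …, ang(h^*, F_{n,K}) is not equal to π/2; equivalently, it is impossible that ang(h^*, F_{n,l}) ≥ π/2 for all l ∈ {1,…,K} while ang(h^*, F_{n,i}) = π/2 for some i. -/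
lemma aux_norm_lt (h w : ℂ) (hw : w ≠ 0) (hr : 0 ≤ (h * (starRingEnd ℂ) w).re) :
    ‖h‖ < ‖h + w‖ := by
  have h1 : 0 < Complex.normSq w := Complex.normSq_pos.mpr hw
  have h2 := Complex.normSq_add h w
  rw [Complex.normSq_eq_norm_sq, Complex.normSq_eq_norm_sq h] at h2
  apply lt_of_pow_lt_pow_left₀ 2 (norm_nonneg _)
  linarith

/-- Theorem 1 part (ii): the smallest angle among `ang(h^*, F n 1), …, ang(h^*, F n K)`
is never equal to `π/2` in an optimal configuration. -/
theorem stmt_7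
    {N K : ℕ} (hN : 0 < N) (hK : 0 < K)
    (h_d : ℂ) (v : Fin N → ℂ) (φ : Fin K → ℝ)
    (hφinj : Function.Injective φ)
    (hφrange : ∀ i, 0 ≤ φ i ∧ φ i < 2 * Real.pi)
    (F : Fin N → Fin K → ℂ)
    (hF : ∀ m i, F m i = v m * Complex.exp ((φ i : ℂ) * Complex.I))
    (g : Fin N → ℂ)
    (hg : ∀ m, g m = 0 ∨ ∃ i, g m = F m i)
    (hopt : ∀ g' : Fin N → ℂ, (∀ m, g' m = 0 ∨ ∃ i, g' m = F m i) →
      ‖h_d + ∑ m, g' m‖ ≤ ‖h_d + ∑ m, g m‖)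
    (hstar : h_d + ∑ m, g m ≠ 0)
    (n : Fin N) (hvn : v n ≠ 0)
    (i : Fin K)
    (hmin : ∀ l, ang (h_d + ∑ m, g m) (F n i) ≤ ang (h_d + ∑ m, g m) (F n l)) :
    ang (h_d + ∑ m, g m) (F n i) ≠ Real.pi / 2 := by
  intro hang
  have hFne : ∀ l, F n l ≠ 0 := fun l => by
    rw [hF]; exact mul_ne_zero hvn (Complex.exp_ne_zero _)
  have hsum : ∀ w : ℂ, h_d + ∑ m, Function.update g n w m
      = (h_d + ∑ m, g m) + (w - g n) := by
    intro w
    rw [Finset.sum_update_of_mem (Finset.mem_univ n),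
      ← Finset.add_sum_erase Finset.univ g (Finset.mem_univ n), Finset.sdiff_singleton_eq_erase]
    ring
  have hbest : ∀ w : ℂ, (w = 0 ∨ ∃ l, w = F n l) →
      ‖(h_d + ∑ m, g m) + (w - g n)‖ ≤ ‖h_d + ∑ m, g m‖ := by
    intro w hw
    rw [← hsum w]
    apply hopt
    intro m
    by_cases hm : m = n
    · subst hm; simpa using hw
    · simpa [hm] using hg m
  generalize h_d + ∑ m, g m = h at *
  have hpos : ∀ l, 0 < ‖h‖ * ‖F n l‖ := fun l =>
    mul_pos (norm_pos_iff.mpr hstar) (norm_pos_iff.mpr (hFne l))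
  rcases hg n with h0 | ⟨l, hl⟩
  · have h1 := hbest (F n i) (Or.inr ⟨i, rfl⟩)
    rw [h0, sub_zero] at h1
    refine absurd h1 (not_le.mpr (aux_norm_lt h _ (hFne i) ?_))
    have h2 := Real.arccos_le_pi_div_two.mp (le_of_eq hang)
    by_contra hneg
    exact absurd h2 (not_le.mpr (div_neg_of_neg_of_pos (not_le.mp hneg) (hpos i)))
  · have h1 := hbest 0 (Or.inl rfl)
    rw [hl, zero_sub] at h1
    refine absurd h1 (not_le.mpr (aux_norm_lt h _ (neg_ne_zero.mpr (hFne l)) ?_))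
    rw [map_neg, mul_neg, Complex.neg_re, neg_nonneg]
    by_contra hneg
    have h2 := hmin l
    rw [hang] at h2
    exact absurd h2 (not_le.mpr (Real.arccos_lt_pi_div_two.mpr
      (div_pos (not_le.mp hneg) (hpos l))))
end

section
/- (Theorem 1, part (iii)) Suppose (g_n^*) is an optimal configuration with overall channel h^* ≠ 0, and let n be an element with v_n ≠ 0. If i is an index such that ang(h^*, F_{n,i}) ≤ ang(h^*, F_{n,l}) for every l ∈ {1,…,K} and ang(h^*, F_{n,i}) > π/2, then g_n^* = 0, i.e., element n is turned off in the optimal configuration. -/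
/-- Theorem 1 part (iii): if `F n i` has the smallest angle with `h^*` and that angle
is `> π/2`, then element `n` is turned off in the optimal configuration. -/
theorem stmt_8
    {N K : ℕ} (hN : 0 < N) (hK : 0 < K)
    (h_d : ℂ) (v : Fin N → ℂ) (φ : Fin K → ℝ)
    (hφinj : Function.Injective φ)
    (hφrange : ∀ i, 0 ≤ φ i ∧ φ i < 2 * Real.pi)
    (F : Fin N → Fin K → ℂ)
    (hF : ∀ m i, F m i = v m * Complex.exp ((φ i : ℂ) * Complex.I))
    (g : Fin N → ℂ)
    (hg : ∀ m, g m = 0 ∨ ∃ i, g m = F m i)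
    (hopt : ∀ g' : Fin N → ℂ, (∀ m, g' m = 0 ∨ ∃ i, g' m = F m i) →
      ‖h_d + ∑ m, g' m‖ ≤ ‖h_d + ∑ m, g m‖)
    (hstar : h_d + ∑ m, g m ≠ 0)
    (n : Fin N) (hvn : v n ≠ 0)
    (i : Fin K)
    (hmin : ∀ l, ang (h_d + ∑ m, g m) (F n i) ≤ ang (h_d + ∑ m, g m) (F n l))
    (hang : Real.pi / 2 < ang (h_d + ∑ m, g m) (F n i)) :
    g n = 0 := by
  obtain h0 | ⟨l, hl⟩ := hg n
  · exact h0
  have hlt := lt_of_lt_of_le hang (hmin l)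
  rw [← hl] at hlt
  have hs := hopt (Function.update g n 0) (by
    intro m
    by_cases hm : m = n
    · subst hm; left; simp
    · rw [Function.update_of_ne hm]; exact hg m)
  have hsum : ∑ m, Function.update g n 0 m = ∑ m, g m - g n := by
    rw [Finset.sum_update_of_mem (Finset.mem_univ n), eq_sub_iff_add_eq, zero_add,
      ← Finset.erase_eq, Finset.sum_erase_add _ _ (Finset.mem_univ n)]
  rw [hsum, ← add_sub_assoc] at hs
  generalize h_d + ∑ m, g m = h at *
  unfold ang at hlt
  have hneg : (h * (starRingEnd ℂ) (g n)).re < 0 := by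
    by_contra hc
    push Not at hc
    have := Real.arccos_le_pi_div_two.2 (div_nonneg hc (by positivity : 0 ≤ ‖h‖ * ‖g n‖))
    linarith
  have h2 : ‖h - g n‖ ^ 2 ≤ ‖h‖ ^ 2 := by gcongr
  rw [← Complex.normSq_eq_norm_sq, ← Complex.normSq_eq_norm_sq, Complex.normSq_sub] at h2
  linarith [Complex.normSq_nonneg (g n)]
end

section
/- (Swap lemma underlying Theorem 1) Let z, u, w ∈ ℂ with z ≠ 0, u ≠ w, and |u| = |w|. If ang(z, u) ≤ ang(z, w), then |z + u − w| > |z|. In words: replacing the contribution w by a different vector u of the same amplitude whose angle with z is not larger strictly increases the amplitude of the sum. -/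
/-- Swap lemma underlying Theorem 1: replacing the contribution `w` by a different vector `u`
of the same amplitude whose angle with `z` is not larger strictly increases the amplitude
of the sum: `|z + u - w| > |z|`. -/
theorem stmt_9 (z u w : ℂ) (hz : z ≠ 0) (huw : u ≠ w)
    (habs : ‖u‖ = ‖w‖)
    (hang : ang z u ≤ ang z w) :
    ‖z‖ < ‖z + u - w‖ := by
  have key : ∀ b : ℂ, |(z * (starRingEnd ℂ) b).re / (‖z‖ * ‖b‖)| ≤ 1 := by
    intro b
    rw [abs_div, abs_of_nonneg (by positivity : 0 ≤ ‖z‖ * ‖b‖)]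
    apply div_le_one_of_le₀ _ (by positivity)
    have h := Complex.abs_re_le_norm (z * (starRingEnd ℂ) b)
    rwa [norm_mul, RCLike.norm_conj] at h
  have hw : 0 < ‖w‖ := by
    rw [norm_pos_iff]
    rintro rfl
    rw [norm_zero, norm_eq_zero] at habs
    exact huw habs
  have hzp : 0 < ‖z‖ := norm_pos_iff.mpr hz
  have hu1 := abs_le.mp (key u)
  have hw1 := abs_le.mp (key w)
  have h1 : (z * (starRingEnd ℂ) w).re / (‖z‖ * ‖w‖) ≤
      (z * (starRingEnd ℂ) u).re / (‖z‖ * ‖u‖) := by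
    by_contra hlt
    push Not at hlt
    have := Real.strictAntiOn_arccos ⟨hu1.1, hu1.2⟩ ⟨hw1.1, hw1.2⟩ hlt
    unfold ang at hang
    linarith
  rw [habs, div_le_div_iff_of_pos_right (by positivity)] at h1
  have hd : 0 < Complex.normSq (u - w) := Complex.normSq_pos.mpr (sub_ne_zero.mpr huw)
  apply lt_of_pow_lt_pow_left₀ 2 (norm_nonneg _)
  rw [← Complex.normSq_eq_norm_sq, ← Complex.normSq_eq_norm_sq]
  simp only [Complex.normSq_apply, Complex.mul_re, Complex.conj_re, Complex.conj_im,
    Complex.sub_re, Complex.sub_im, Complex.add_re, Complex.add_im] at *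
  nlinarith
end

section
/- Suppose (g_n^*) is an optimal configuration with overall channel h^* ≠ 0, and let n be an element with v_n ≠ 0. If element n is on, i.e., g_n^* = F_{n,l} for some index l, then ang(h^*, F_{n,l}) ≤ ang(h^*, F_{n,i}) for every i ∈ {1,…,K}; that is, any element that is on in the optimal configuration uses the available phase shift whose reflected vector has the smallest angle with h^*. -/
/-- Any element that is on in an optimal configuration uses the available phase shift whose
reflected vector has the smallest angle with `h^*`. -/
theorem stmt_11
    {N K : ℕ} (hN : 0 < N) (hK : 0 < K)
    (h_d : ℂ) (v : Fin N → ℂ) (φ : Fin K → ℝ)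
    (hφinj : Function.Injective φ)
    (hφrange : ∀ i, 0 ≤ φ i ∧ φ i < 2 * Real.pi)
    (F : Fin N → Fin K → ℂ)
    (hF : ∀ m i, F m i = v m * Complex.exp ((φ i : ℂ) * Complex.I))
    (g : Fin N → ℂ)
    (hg : ∀ m, g m = 0 ∨ ∃ i, g m = F m i)
    (hopt : ∀ g' : Fin N → ℂ, (∀ m, g' m = 0 ∨ ∃ i, g' m = F m i) →
      ‖h_d + ∑ m, g' m‖ ≤ ‖h_d + ∑ m, g m‖)
    (hstar : h_d + ∑ m, g m ≠ 0)
    (n : Fin N) (hvn : v n ≠ 0)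
    (l : Fin K) (hl : g n = F n l) :
    ∀ i, ang (h_d + ∑ m, g m) (F n l) ≤ ang (h_d + ∑ m, g m) (F n i) := by
  intro i
  have hsum : h_d + ∑ m, Function.update g n (F n i) m
      = (h_d + ∑ m, g m) + (F n i - F n l) := by
    rw [Finset.sum_update_of_mem (Finset.mem_univ n),
      ← Finset.add_sum_erase Finset.univ g (Finset.mem_univ n), hl,
      Finset.sdiff_singleton_eq_erase]
    ring
  have hle := hopt (Function.update g n (F n i)) (by
    intro m
    by_cases hm : m = n
    · subst hm
      right
      exact ⟨i, by simp⟩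
    · simpa [hm] using hg m)
  rw [hsum] at hle
  have hnorm : ∀ k, ‖F n k‖ = ‖v n‖ := by
    intro k
    rw [hF, norm_mul, Complex.norm_exp_ofReal_mul_I, mul_one]
  unfold ang
  rw [hnorm l, hnorm i]
  apply Real.arccos_le_arccos
  apply div_le_div_of_nonneg_right _ (by positivity)
  generalize h_d + ∑ m, g m = h at *
  generalize F n i = a at *
  generalize F n l = b at *
  have h2 : ‖h + (a - b)‖ ^ 2 ≤ ‖h‖ ^ 2 := by gcongr
  rw [Complex.sq_norm, Complex.sq_norm, Complex.normSq_apply, Complex.normSq_apply] at h2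
  simp only [Complex.add_re, Complex.add_im, Complex.sub_re, Complex.sub_im] at h2
  simp only [Complex.mul_re, Complex.conj_re, Complex.conj_im]
  nlinarith [sq_nonneg (a.re - b.re), sq_nonneg (a.im - b.im)]
end

section
/- (Empty region around a separation line, on case) Suppose (g_n^*) is an optimal configuration with overall channel h^*, and g_n^* = F_{n,i} for some element n and index i. Then for every index l, 2·Re(conj(h^*)·(F_{n,l} − F_{n,i})) ≤ −|F_{n,l} − F_{n,i}|². Consequently, if h^* ≠ 0 and F_{n,l} ≠ F_{n,i}, then |F_{n,l} − F_{n,i}| ≤ 2|h^*| and ang(h^*, F_{n,l} − F_{n,i}) ≥ π/2 + arcsin(|F_{n,l} − F_{n,i}|/(2|h^*|)). -/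
theorem aux_on (h d : ℂ) (hle : ‖h + d‖ ≤ ‖h‖) :
    2 * ((starRingEnd ℂ) h * d).re ≤ -(‖d‖)^2 ∧
    (h ≠ 0 → d ≠ 0 → ‖d‖ ≤ 2 * ‖h‖ ∧
      Real.pi / 2 + Real.arcsin (‖d‖ / (2 * ‖h‖)) ≤ ang h d) := by
  have h1 : 2 * ((starRingEnd ℂ) h * d).re ≤ -(‖d‖)^2 := by
    have h2 : ‖h + d‖ ^ 2 ≤ ‖h‖ ^ 2 := by gcongr
    rw [Complex.sq_norm, Complex.sq_norm, Complex.normSq_apply, Complex.normSq_apply] at h2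
    rw [Complex.sq_norm, Complex.normSq_apply]
    simp only [Complex.mul_re, Complex.conj_re, Complex.conj_im, Complex.add_re,
      Complex.add_im] at *
    nlinarith
  refine ⟨h1, fun hh hd => ⟨?_, ?_⟩⟩
  · calc ‖d‖ = ‖(h + d) - h‖ := by rw [add_sub_cancel_left]
      _ ≤ ‖h + d‖ + ‖h‖ := norm_sub_le _ _
      _ ≤ 2 * ‖h‖ := by linarith
  · have ph : 0 < ‖h‖ := norm_pos_iff.mpr hh
    have pd : 0 < ‖d‖ := norm_pos_iff.mpr hd
    have e : (h * (starRingEnd ℂ) d).re = ((starRingEnd ℂ) h * d).re := by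
      simp
    unfold ang
    rw [Real.arccos_eq_pi_div_two_sub_arcsin, sub_eq_add_neg, ← Real.arcsin_neg, e]
    refine add_le_add le_rfl (Real.monotone_arcsin ?_)
    rw [← neg_div, div_le_div_iff₀ (by positivity) (by positivity)]
    nlinarith

/-- Empty region around a separation line, on case: if `g n = F n i` is optimal then for
every `l`, `2·Re(conj(h^*)·(F n l − F n i)) ≤ −|F n l − F n i|²`; consequently, if `h^* ≠ 0`
and `F n l ≠ F n i`, then `|F n l − F n i| ≤ 2|h^*|` and
`ang(h^*, F n l − F n i) ≥ π/2 + arcsin(|F n l − F n i|/(2|h^*|))`. -/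
theorem stmt_12
    {N K : ℕ} (hN : 0 < N) (hK : 0 < K)
    (h_d : ℂ) (v : Fin N → ℂ) (φ : Fin K → ℝ)
    (hφinj : Function.Injective φ)
    (hφrange : ∀ i, 0 ≤ φ i ∧ φ i < 2 * Real.pi)
    (F : Fin N → Fin K → ℂ)
    (hF : ∀ m i, F m i = v m * Complex.exp ((φ i : ℂ) * Complex.I))
    (g : Fin N → ℂ)
    (hg : ∀ m, g m = 0 ∨ ∃ i, g m = F m i)
    (hopt : ∀ g' : Fin N → ℂ, (∀ m, g' m = 0 ∨ ∃ i, g' m = F m i) →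
      ‖h_d + ∑ m, g' m‖ ≤ ‖h_d + ∑ m, g m‖)
    (n : Fin N) (i : Fin K) (hi : g n = F n i) :
    ∀ l : Fin K,
      2 * ((starRingEnd ℂ) (h_d + ∑ m, g m) * (F n l - F n i)).re ≤
        -(‖F n l - F n i‖)^2 ∧
      (h_d + ∑ m, g m ≠ 0 → F n l ≠ F n i →
        ‖F n l - F n i‖ ≤ 2 * ‖h_d + ∑ m, g m‖ ∧
        Real.pi / 2 +
            Real.arcsin (‖F n l - F n i‖ / (2 * ‖h_d + ∑ m, g m‖)) ≤
          ang (h_d + ∑ m, g m) (F n l - F n i)) := by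
  intro l
  have hle : ‖(h_d + ∑ m, g m) + (F n l - F n i)‖ ≤ ‖h_d + ∑ m, g m‖ := by
    have := hopt (Function.update g n (F n l)) (by
      intro m
      by_cases hm : m = n
      · subst hm
        right
        exact ⟨l, by simp⟩
      · simpa [Function.update_of_ne hm] using hg m)
    rw [Finset.sum_update_of_mem (Finset.mem_univ n)] at this
    have e := Finset.sum_sdiff (f := g) (Finset.subset_univ {n})
    rw [Finset.sum_singleton, hi] at e
    convert this using 2
    rw [← e]
    ring
  obtain ⟨h1, h2⟩ := aux_on _ _ hle
  exact ⟨h1, fun a b => h2 a (sub_ne_zero.mpr b)⟩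
end

section
/- (Empty region around a separation line, off case) Suppose (g_n^*) is an optimal configuration with overall channel h^*, and g_n^* = 0 for some element n. Then for every index i, 2·Re(conj(h^*)·F_{n,i}) ≤ −|v_n|². Consequently, if h^* ≠ 0 and v_n ≠ 0, then |v_n| ≤ 2|h^*| and ang(h^*, F_{n,i}) ≥ π/2 + arcsin(|v_n|/(2|h^*|)) for every i. -/
/-- Empty region around a separation line, off case: if `g n = 0` is optimal then for every
`i`, `2·Re(conj(h^*)·F n i) ≤ −|v n|²`; consequently, if `h^* ≠ 0` and `v n ≠ 0`, then
`|v n| ≤ 2|h^*|` and `ang(h^*, F n i) ≥ π/2 + arcsin(|v n|/(2|h^*|))` for every `i`. -/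
theorem stmt_13
    {N K : ℕ} (hN : 0 < N) (hK : 0 < K)
    (h_d : ℂ) (v : Fin N → ℂ) (φ : Fin K → ℝ)
    (hφinj : Function.Injective φ)
    (hφrange : ∀ i, 0 ≤ φ i ∧ φ i < 2 * Real.pi)
    (F : Fin N → Fin K → ℂ)
    (hF : ∀ m i, F m i = v m * Complex.exp ((φ i : ℂ) * Complex.I))
    (g : Fin N → ℂ)
    (hg : ∀ m, g m = 0 ∨ ∃ i, g m = F m i)
    (hopt : ∀ g' : Fin N → ℂ, (∀ m, g' m = 0 ∨ ∃ i, g' m = F m i) →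
      ‖h_d + ∑ m, g' m‖ ≤ ‖h_d + ∑ m, g m‖)
    (n : Fin N) (hn : g n = 0) :
    (∀ i : Fin K,
      2 * ((starRingEnd ℂ) (h_d + ∑ m, g m) * F n i).re ≤ -(‖v n‖)^2) ∧
    (h_d + ∑ m, g m ≠ 0 → v n ≠ 0 →
      ‖v n‖ ≤ 2 * ‖h_d + ∑ m, g m‖ ∧
      ∀ i : Fin K,
        Real.pi / 2 + Real.arcsin (‖v n‖ / (2 * ‖h_d + ∑ m, g m‖)) ≤
          ang (h_d + ∑ m, g m) (F n i)) := by
  have hnF : ∀ i, ‖F n i‖ = ‖v n‖ := by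
    intro i
    rw [hF, norm_mul, Complex.norm_exp_ofReal_mul_I, mul_one]
  have hle : ∀ i, ‖(h_d + ∑ m, g m) + F n i‖ ≤ ‖h_d + ∑ m, g m‖ := by
    intro i
    have h1 := hopt (Function.update g n (F n i)) (by
      intro m
      by_cases hm : m = n
      · subst hm
        right
        exact ⟨i, by simp⟩
      · simpa [Function.update_of_ne hm] using hg m)
    have h2 : ∑ m, Function.update g n (F n i) m = ∑ m, g m + F n i := by
      have h3 := Finset.sum_update_of_mem (Finset.mem_univ n) g (F n i)
      have h4 := Finset.sum_update_of_mem (Finset.mem_univ n) g (g n)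
      rw [Function.update_eq_self, hn, zero_add] at h4
      rw [h3, h4, add_comm]
    rw [h2, ← add_assoc] at h1
    exact h1
  clear hopt
  generalize h_d + ∑ m, g m = H at *
  have key : ∀ i : Fin K, 2 * ((starRingEnd ℂ) H * F n i).re ≤ -(‖v n‖)^2 := by
    intro i
    have h1 := pow_le_pow_left₀ (norm_nonneg _) (hle i) 2
    rw [← hnF i]
    rw [← Complex.normSq_eq_norm_sq, ← Complex.normSq_eq_norm_sq] at h1
    rw [← Complex.normSq_eq_norm_sq]
    simp only [Complex.normSq_apply, Complex.add_re, Complex.add_im, Complex.mul_re,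
      Complex.conj_re, Complex.conj_im] at *
    nlinarith
  refine ⟨key, fun hH hv => ⟨?_, fun i => ?_⟩⟩
  · have h1 := hle ⟨0, hK⟩
    have h2 := norm_sub_le (H + F n ⟨0, hK⟩) H
    rw [add_sub_cancel_left, hnF] at h2
    linarith
  · have hp : 0 < ‖H‖ := norm_pos_iff.mpr hH
    have hq : 0 < ‖v n‖ := norm_pos_iff.mpr hv
    have h0 : Real.pi / 2 + Real.arcsin (‖v n‖ / (2 * ‖H‖))
        = Real.arccos (-(‖v n‖ / (2 * ‖H‖))) := by
      rw [Real.arccos_neg, Real.arccos]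
      ring
    rw [h0, ang, hnF]
    apply Real.arccos_le_arccos
    have h1 := key i
    have h2 : (H * (starRingEnd ℂ) (F n i)).re = ((starRingEnd ℂ) H * F n i).re := by
      simp [Complex.mul_re]
    rw [h2, div_le_iff₀ (by positivity)]
    have h3 : -(‖v n‖ / (2 * ‖H‖)) * (‖H‖ * ‖v n‖) = -(‖v n‖)^2 / 2 := by
      field_simp
    rw [h3]
    linarith
end

section
/- (No element is off when consecutive phase gaps are below π) Suppose the phase shifts satisfy 0 ≤ φ_1 < φ_2 < … < φ_K < 2π, with φ_{i+1} − φ_i < π for every i ∈ {1,…,K−1} and 2π − φ_K + φ_1 < π. Then for every nonzero z ∈ ℂ there exists an index i with ang(z, e^{jφ_i}) < π/2. Consequently, in every optimal configuration with overall channel h^* ≠ 0 and v_n ≠ 0 for all n, every element is on: g_n^* ≠ 0 for all n. -/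
theorem core_cos {K : ℕ} (hK : 0 < K) (φ : Fin K → ℝ)
    (hgap : ∀ i : Fin K, ∀ h : i.val + 1 < K, φ ⟨i.val + 1, h⟩ - φ i < Real.pi)
    (hwrap : 2 * Real.pi - φ ⟨K - 1, Nat.sub_lt hK one_pos⟩ + φ ⟨0, hK⟩ < Real.pi) (t : ℝ) :
    ∃ i : Fin K, 0 < Real.cos (t - φ i) := by
  have hp := Real.pi_pos
  obtain ⟨θ, ⟨h0, h1⟩, k, hk⟩ : ∃ θ ∈ Set.Ico (φ ⟨0, hK⟩) (φ ⟨0, hK⟩ + 2 * Real.pi),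
      ∃ k : ℤ, t = θ + k * (2 * Real.pi) := by
    refine ⟨toIcoMod Real.two_pi_pos (φ ⟨0, hK⟩) t, toIcoMod_mem_Ico _ _ _,
      toIcoDiv Real.two_pi_pos (φ ⟨0, hK⟩) t, ?_⟩
    have := toIcoMod_add_toIcoDiv_zsmul Real.two_pi_pos (φ ⟨0, hK⟩) t
    rw [zsmul_eq_mul] at this
    exact this.symm
  suffices h : ∃ i : Fin K, 0 < Real.cos (θ - φ i) by
    obtain ⟨i, hi⟩ := h
    refine ⟨i, ?_⟩
    have e : t - φ i = (θ - φ i) + k * (2 * Real.pi) := by rw [hk]; ring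
    rw [e, Real.cos_add_int_mul_two_pi]
    exact hi
  by_cases hex : ∃ i : Fin K, ∃ h : i.val + 1 < K, φ i ≤ θ ∧ θ < φ ⟨i.val + 1, h⟩
  · obtain ⟨i, h, ha, hb⟩ := hex
    have := hgap i h
    by_cases hc : θ - φ i < Real.pi / 2
    · exact ⟨i, Real.cos_pos_of_mem_Ioo ⟨by linarith, hc⟩⟩
    · exact ⟨_, Real.cos_pos_of_mem_Ioo (x := θ - φ ⟨i.val + 1, h⟩) ⟨by linarith, by linarith⟩⟩
  · push Not at hex
    have hall : ∀ n : ℕ, ∀ h : n < K, φ ⟨n, h⟩ ≤ θ := by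
      intro n
      induction n with
      | zero => intro h; exact h0
      | succ n ih => intro h; exact hex ⟨n, by omega⟩ h (ih _)
    have hl := hall (K - 1) (Nat.sub_lt hK one_pos)
    by_cases hc : θ - φ ⟨K - 1, Nat.sub_lt hK one_pos⟩ < Real.pi / 2
    · exact ⟨_, Real.cos_pos_of_mem_Ioo ⟨by linarith, hc⟩⟩
    · refine ⟨⟨0, hK⟩, ?_⟩
      rw [← Real.cos_sub_two_pi]
      exact Real.cos_pos_of_mem_Ioo ⟨by linarith, by linarith⟩

/-- If the phase shifts `0 ≤ φ 1 < … < φ K < 2π` have all consecutive gaps (including the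
wrap-around gap) below `π`, then every nonzero `z` makes an angle `< π/2` with some `e^{jφ i}`;
consequently, in every optimal configuration with `h^* ≠ 0` and all `v n ≠ 0`, every element
is on. -/
theorem stmt_15
    {N K : ℕ} (hN : 0 < N) (hK : 0 < K)
    (h_d : ℂ) (v : Fin N → ℂ) (φ : Fin K → ℝ)
    (hφmono : StrictMono φ)
    (hφ0 : 0 ≤ φ ⟨0, hK⟩)
    (hφtop : φ ⟨K - 1, Nat.sub_lt hK one_pos⟩ < 2 * Real.pi)
    (hgap : ∀ i : Fin K, ∀ h : i.val + 1 < K, φ ⟨i.val + 1, h⟩ - φ i < Real.pi)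
    (hwrap : 2 * Real.pi - φ ⟨K - 1, Nat.sub_lt hK one_pos⟩ + φ ⟨0, hK⟩ < Real.pi)
    (F : Fin N → Fin K → ℂ)
    (hF : ∀ m i, F m i = v m * Complex.exp ((φ i : ℂ) * Complex.I)) :
    (∀ z : ℂ, z ≠ 0 →
      ∃ i : Fin K, ang z (Complex.exp ((φ i : ℂ) * Complex.I)) < Real.pi / 2) ∧
    (∀ g : Fin N → ℂ, (∀ m, g m = 0 ∨ ∃ i, g m = F m i) →
      (∀ g' : Fin N → ℂ, (∀ m, g' m = 0 ∨ ∃ i, g' m = F m i) →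
        ‖h_d + ∑ m, g' m‖ ≤ ‖h_d + ∑ m, g m‖) →
      h_d + ∑ m, g m ≠ 0 → (∀ n, v n ≠ 0) →
      ∀ n, g n ≠ 0) := by
  have key : ∀ z : ℂ, z ≠ 0 → ∃ i : Fin K,
      0 < (z * (starRingEnd ℂ) (Complex.exp ((φ i : ℂ) * Complex.I))).re := by
    intro z hz
    obtain ⟨i, hi⟩ := core_cos hK φ hgap hwrap z.arg
    refine ⟨i, ?_⟩
    have hn := norm_pos_iff.mpr hz
    have e : (z * (starRingEnd ℂ) (Complex.exp ((φ i : ℂ) * Complex.I))).re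
        = ‖z‖ * Real.cos (z.arg - φ i) := by
      rw [Real.cos_sub, Complex.mul_re, Complex.conj_re, Complex.conj_im,
        Complex.exp_ofReal_mul_I_re, Complex.exp_ofReal_mul_I_im]
      linear_combination (-Real.cos (φ i)) * Complex.norm_mul_cos_arg z
        - Real.sin (φ i) * Complex.norm_mul_sin_arg z
    rw [e]
    positivity
  refine ⟨?_, ?_⟩
  · intro z hz
    obtain ⟨i, hi⟩ := key z hz
    refine ⟨i, ?_⟩
    have hn := norm_pos_iff.mpr hz
    unfold ang
    rw [Real.arccos_lt_pi_div_two, Complex.norm_exp_ofReal_mul_I, mul_one]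
    exact div_pos hi hn
  · intro g hg hopt hne hv n hgn
    obtain ⟨i, hi⟩ := key ((h_d + ∑ m, g m) * (starRingEnd ℂ) (v n))
      (mul_ne_zero hne ((map_ne_zero _).mpr (hv n)))
    have h1 := hopt (Function.update g n (F n i)) (by
      intro m
      by_cases hm : m = n
      · subst hm
        right
        exact ⟨i, by simp⟩
      · simpa [Function.update_of_ne hm] using hg m)
    have h2 : h_d + ∑ m, Function.update g n (F n i) m = (h_d + ∑ m, g m) + F n i := by
      rw [Finset.sum_update_of_mem (Finset.mem_univ n),
        ← Finset.add_sum_erase _ g (Finset.mem_univ n), hgn, Finset.sdiff_singleton_eq_erase]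
      ring
    rw [h2] at h1
    rw [mul_assoc, ← map_mul, ← hF] at hi
    have h3 := Complex.normSq_add (h_d + ∑ m, g m) (F n i)
    rw [Complex.normSq_eq_norm_sq, Complex.normSq_eq_norm_sq] at h3
    have h4 := Complex.normSq_nonneg (F n i)
    have h5 := pow_le_pow_left₀ (norm_nonneg _) h1 2
    linarith
end

section
/- (Equivalence of the relaxed and binary amplitude problems) The supremum of |h(β,α)| over all amplitude vectors β ∈ [0,1]^N and phase vectors α ∈ Φ^N equals the maximum of |h(β,α)| over the finite set of β ∈ {0,1}^N and α ∈ Φ^N; in particular this supremum is attained. -/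
lemma aux_binary {ι : Type*} [DecidableEq ι] (c : ι → ℂ) (β : ι → ℝ)
    (hβ : ∀ n, β n ∈ Set.Icc (0:ℝ) 1) (s : Finset ι) : ∀ z : ℂ,
    ∃ γ : ι → ℝ, (∀ n, γ n = 0 ∨ γ n = 1) ∧
      ‖z + ∑ n ∈ s, (β n : ℂ) * c n‖ ≤ ‖z + ∑ n ∈ s, (γ n : ℂ) * c n‖ := by
  induction s using Finset.induction_on with
  | empty => intro z; exact ⟨fun _ => 0, fun _ => Or.inl rfl, by simp⟩
  | insert a s ha ih =>
    intro z
    obtain ⟨γ, hγ, hle⟩ := ih (z + (β a : ℂ) * c a)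
    have upd : ∀ t : ℝ, z + ∑ n ∈ insert a s, ((Function.update γ a t n : ℝ) : ℂ) * c n
        = (z + ∑ n ∈ s, (γ n : ℂ) * c n) + (t : ℂ) * c a := by
      intro t
      rw [Finset.sum_insert ha]
      have : ∑ n ∈ s, ((Function.update γ a t n : ℝ) : ℂ) * c n = ∑ n ∈ s, (γ n : ℂ) * c n := by
        refine Finset.sum_congr rfl fun n hn => ?_
        have : n ≠ a := fun h => ha (h ▸ hn)
        rw [Function.update_of_ne this]
      rw [this, Function.update_self]; ring
    have hbin : ∀ t : ℝ, (t = 0 ∨ t = 1) → ∀ n, Function.update γ a t n = 0 ∨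
        Function.update γ a t n = 1 := by
      intro t ht n
      by_cases h : n = a
      · subst h; simpa using ht
      · rw [Function.update_of_ne h]; exact hγ n
    have e : z + ∑ n ∈ insert a s, (β n : ℂ) * c n
        = z + (β a : ℂ) * c a + ∑ n ∈ s, (β n : ℂ) * c n := by
      rw [Finset.sum_insert ha]; ring
    set w := z + ∑ n ∈ s, (γ n : ℂ) * c n with hw
    have e2 : z + (β a : ℂ) * c a + ∑ n ∈ s, (γ n : ℂ) * c n
        = ((1 - β a : ℝ) : ℂ) * w + (β a : ℂ) * (w + c a) := by
      rw [hw]; push_cast; ring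
    obtain ⟨h0, h1⟩ := hβ a
    have key : ‖z + (β a : ℂ) * c a + ∑ n ∈ s, (γ n : ℂ) * c n‖
        ≤ (1 - β a) * ‖w‖ + β a * ‖w + c a‖ := by
      rw [e2]
      refine (norm_add_le _ _).trans ?_
      rw [norm_mul, norm_mul, Complex.norm_real, Complex.norm_real, Real.norm_of_nonneg h0,
        Real.norm_of_nonneg (by linarith)]
    rcases le_total ‖w‖ ‖w + c a‖ with h | h
    · refine ⟨Function.update γ a 1, hbin 1 (Or.inr rfl), ?_⟩
      rw [upd, e]
      simp only [Complex.ofReal_one, one_mul]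
      nlinarith
    · refine ⟨Function.update γ a 0, hbin 0 (Or.inl rfl), ?_⟩
      rw [upd, e]
      simp only [Complex.ofReal_zero, zero_mul, add_zero]
      nlinarith

/-- Equivalence of the relaxed and binary amplitude problems: the supremum of `|h(β,α)|` over
`β ∈ [0,1]^N`, `α ∈ Φ^N` equals the maximum of `|h(β,α)|` over the finite set of binary
`β ∈ {0,1}^N`, `α ∈ Φ^N`; in particular the supremum is attained. -/
theorem stmt_16 {N : ℕ} (hN : 0 < N) (h_d : ℂ) (v : Fin N → ℂ)
    (Φ : Finset ℝ) (hΦ : Φ.Nonempty)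
    (A B : Set ℝ)
    (hA : A = {x | ∃ β α : Fin N → ℝ, (∀ n, β n ∈ Set.Icc (0:ℝ) 1) ∧ (∀ n, α n ∈ Φ) ∧
        x = ‖h_d + ∑ n, v n * (β n : ℂ) * Complex.exp ((α n : ℂ) * Complex.I)‖})
    (hB : B = {x | ∃ β α : Fin N → ℝ, (∀ n, β n = 0 ∨ β n = 1) ∧ (∀ n, α n ∈ Φ) ∧
        x = ‖h_d + ∑ n, v n * (β n : ℂ) * Complex.exp ((α n : ℂ) * Complex.I)‖}) :
    IsGreatest B (sSup A) ∧ sSup A ∈ A := by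
  have hBA : B ⊆ A := by
    rw [hA, hB]
    rintro x ⟨β, α, hβ, hα, rfl⟩
    refine ⟨β, α, fun n => ?_, hα, rfl⟩
    rcases hβ n with h | h <;> simp [h]
  have hfin : B.Finite := by
    have h1 : (Set.pi Set.univ (fun _ : Fin N => ({0, 1} : Set ℝ))).Finite :=
      Set.Finite.pi' (fun _ => by simp) |>.subset (fun f hf n => hf n trivial)
    have h2 : (Set.pi Set.univ (fun _ : Fin N => (Φ : Set ℝ))).Finite :=
      Set.Finite.pi' (fun _ => Φ.finite_toSet) |>.subset (fun f hf n => hf n trivial)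
    refine ((h1.prod h2).image (fun p : (Fin N → ℝ) × (Fin N → ℝ) =>
      ‖h_d + ∑ n, v n * (p.1 n : ℂ) * Complex.exp ((p.2 n : ℂ) * Complex.I)‖)).subset ?_
    rw [hB]
    rintro x ⟨β, α, hβ, hα, rfl⟩
    exact ⟨(β, α), ⟨fun n _ => by simpa using hβ n, fun n _ => hα n⟩, rfl⟩
  have hne : B.Nonempty := by
    obtain ⟨φ, hφ⟩ := hΦ
    rw [hB]
    exact ⟨_, fun _ => 0, fun _ => φ, fun _ => Or.inl rfl, fun _ => hφ, rfl⟩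
  have hdom : ∀ x ∈ A, ∃ y ∈ B, x ≤ y := by
    rw [hA, hB]
    rintro x ⟨β, α, hβ, hα, rfl⟩
    obtain ⟨γ, hγ, hle⟩ := aux_binary
      (fun n => v n * Complex.exp ((α n : ℂ) * Complex.I)) β hβ Finset.univ h_d
    refine ⟨_, ⟨γ, α, hγ, hα, rfl⟩, ?_⟩
    have e : ∀ δ : Fin N → ℝ, ∑ n, v n * (δ n : ℂ) * Complex.exp ((α n : ℂ) * Complex.I)
        = ∑ n, (δ n : ℂ) * (v n * Complex.exp ((α n : ℂ) * Complex.I)) :=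
      fun δ => Finset.sum_congr rfl fun n _ => by ring
    rw [e, e]
    exact hle
  obtain ⟨M, hM, hmax⟩ := hfin.exists_maximal hne
  have hub : ∀ y ∈ B, y ≤ M := fun y hy => (le_total y M).elim id (fun h => hmax hy h)
  have hg : IsGreatest A M := ⟨hBA hM, fun x hx => by
    obtain ⟨y, hy, hxy⟩ := hdom x hx
    exact hxy.trans (hub y hy)⟩
  rw [hg.csSup_eq]
  exact ⟨⟨hM, hub⟩, hBA hM⟩
end
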